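/- arXiv:0901.3167 — 5 statements merged into one kernel-verified Lean document; each statement's English description precedes it below -/
import Mathlib

section
/- Let Δ : ℤ[X] → ℤ[X] ⊗_ℤ ℤ[X] be the ℤ-algebra homomorphism determined by Δ(X) = X ⊗ X. Then for all natural numbers N and M: (i) Δ(1 − X^N) = (1 − X^N) ⊗ 1 + X^N ⊗ (1 − X^N); and (ii) Δ((1 − X^N)^{2M}) lies in the ideal of ℤ[X] ⊗_ℤ ℤ[X] generated by the two elements (1 − X^N)^M ⊗ 1 and 1 ⊗ (1 − X^N)^M. -/
/-! Since `Δ` is multiplicative, `Δ(X ^ N) = X ^ N ⊗ X ^ N`, and part (i) follows by bilinearity.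
For part (ii), `Δ((1 - X ^ N) ^ (2 * M))` is therefore `(a + b) ^ (2 * M)` with
`a = (1 - X ^ N) ⊗ 1` and `b = X ^ N ⊗ (1 - X ^ N)`. In its binomial expansion every term is
divisible by `a ^ M` or by `b ^ M`, and `b ^ M` is a multiple of `1 ⊗ (1 - X ^ N) ^ M`. -/

open Polynomial TensorProduct

/-- The coproduct `Δ : ℤ[X] → ℤ[X] ⊗ ℤ[X]` determined by `Δ(X) = X ⊗ X`. -/
noncomputable def habiroCoproduct :
    Polynomial ℤ →ₐ[ℤ] (Polynomial ℤ ⊗[ℤ] Polynomial ℤ) :=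
  Polynomial.aeval ((X : Polynomial ℤ) ⊗ₜ[ℤ] (X : Polynomial ℤ))

/-- Part (i): `Δ(1 - X^N) = (1 - X^N) ⊗ 1 + X^N ⊗ (1 - X^N)`; part (ii):
`Δ((1 - X^N)^{2M})` lies in the ideal generated by `(1 - X^N)^M ⊗ 1` and
`1 ⊗ (1 - X^N)^M`. -/
theorem habiro_coproduct_descends (N M : ℕ) :
    habiroCoproduct (1 - (X : Polynomial ℤ) ^ N) =
      (1 - (X : Polynomial ℤ) ^ N) ⊗ₜ[ℤ] (1 : Polynomial ℤ) +
        ((X : Polynomial ℤ) ^ N) ⊗ₜ[ℤ] (1 - (X : Polynomial ℤ) ^ N) ∧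
    habiroCoproduct ((1 - (X : Polynomial ℤ) ^ N) ^ (2 * M)) ∈
      Ideal.span ({((1 - (X : Polynomial ℤ) ^ N) ^ M) ⊗ₜ[ℤ] (1 : Polynomial ℤ),
        (1 : Polynomial ℤ) ⊗ₜ[ℤ] ((1 - (X : Polynomial ℤ) ^ N) ^ M)} :
        Set (Polynomial ℤ ⊗[ℤ] Polynomial ℤ)) := by
  have h : habiroCoproduct (1 - (X : Polynomial ℤ) ^ N) =
      (1 - (X : Polynomial ℤ) ^ N) ⊗ₜ[ℤ] (1 : Polynomial ℤ) +
        ((X : Polynomial ℤ) ^ N) ⊗ₜ[ℤ] (1 - (X : Polynomial ℤ) ^ N) := by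
    simp only [habiroCoproduct, map_sub, map_one, map_pow, aeval_X,
      Algebra.TensorProduct.tmul_pow, TensorProduct.sub_tmul, TensorProduct.tmul_sub,
      Algebra.TensorProduct.one_def]
    abel
  refine ⟨h, ?_⟩
  rw [map_pow, h]
  refine Ideal.add_pow_mem_of_pow_mem_of_le (m := M) (n := M) _ ?_ ?_ (by omega)
  · rw [Algebra.TensorProduct.tmul_pow, one_pow]
    exact Ideal.subset_span (by simp)
  · have hb : (((X : Polynomial ℤ) ^ N) ⊗ₜ[ℤ] (1 - (X : Polynomial ℤ) ^ N)) ^ M =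
        ((((X : Polynomial ℤ) ^ N) ^ M) ⊗ₜ[ℤ] (1 : Polynomial ℤ)) *
          ((1 : Polynomial ℤ) ⊗ₜ[ℤ] ((1 - (X : Polynomial ℤ) ^ N) ^ M)) := by
      rw [Algebra.TensorProduct.tmul_pow, Algebra.TensorProduct.tmul_mul_tmul, mul_one, one_mul]
    rw [hb]
    exact Ideal.mul_mem_left _ _ (Ideal.subset_span (by simp))
end

section
/- Let ħ be a real number with 0 < ħ < 1, let ζ ∈ ℂ satisfy ζ^d = 1 for some integer d ≥ 1, and let P ∈ ℂ[X]. Then, as the real parameter β tends to +∞, the quantity (1 − ħ^β) · (∑_{n ≥ 1} n^{−β})^{−1} · ∑_{n ≥ 1} P(ζ^n)·n^{−β} tends to P(ζ). -/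
/-!
As `β → ∞` the weight `n ^ (-β)` tends to `1` for `n = 1` and to `0` for `n ≥ 2`, so every
Dirichlet series with bounded coefficients `a` tends to `a 1`, by dominated convergence with
majorant `C * n ^ (-2)` (`tendsto_dirichlet_atTop`). This is applied to `a n = 1`, giving
`ζ(β) → 1`, and to `a n = P(ζ ^ n)`, which is bounded because `ζ ^ n` stays on the unit circle.
The remaining factor `1 - ħ ^ β` tends to `1`.
-/

open Polynomial Filter

/-- A Dirichlet series with bounded coefficients tends to its first coefficient as the exponent
tends to `+∞`. -/
lemma tendsto_dirichlet_atTop (a : ℕ+ → ℂ) (C : ℝ) (hC : ∀ n, ‖a n‖ ≤ C) :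
    Tendsto (fun β : ℝ => ∑' n : ℕ+, a n * ((((n : ℕ) : ℝ) ^ (-β) : ℝ) : ℂ))
      atTop (nhds (a 1)) := by
  have hsum : Summable fun n : ℕ+ => C * ((n : ℕ) : ℝ) ^ (-2 : ℝ) :=
    ((Real.summable_nat_rpow.2 (by norm_num : (-2 : ℝ) < -1)).comp_injective
      PNat.coe_injective).mul_left C
  have key := tendsto_tsum_of_dominated_convergence (𝓕 := atTop)
    (f := fun (β : ℝ) (n : ℕ+) => a n * ((((n : ℕ) : ℝ) ^ (-β) : ℝ) : ℂ))
    (g := fun n => if n = 1 then a 1 else 0) hsum ?_ ?_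
  · simpa only [tsum_ite_eq] using key
  · intro n
    by_cases hn : n = 1
    · subst hn
      simp
    · have h1n : (1 : ℝ) < ((n : ℕ) : ℝ) := by
        exact_mod_cast lt_of_le_of_ne n.2 (fun h => hn (PNat.coe_injective h.symm))
      have h : Tendsto (fun β : ℝ => ((n : ℕ) : ℝ) ^ (-β)) atTop (nhds 0) :=
        (tendsto_rpow_atBot_of_base_gt_one _ h1n).comp tendsto_neg_atTop_atBot
      have h' := ((Complex.continuous_ofReal.tendsto 0).comp h).const_mul (a n)
      simpa [hn] using h'
  · filter_upwards [eventually_ge_atTop (2 : ℝ)] with β hβ n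
    have hn : (1 : ℝ) ≤ ((n : ℕ) : ℝ) := by exact_mod_cast n.2
    have hp : (0 : ℝ) ≤ ((n : ℕ) : ℝ) ^ (-β) := by positivity
    rw [norm_mul, Complex.norm_real, Real.norm_of_nonneg hp]
    exact mul_le_mul (hC n) (Real.rpow_le_rpow_of_exponent_le hn (by linarith)) hp
      ((norm_nonneg _).trans (hC n))

/-- Zero-temperature limit of Gibbs states recovers evaluations at roots of unity:
for `0 < ħ < 1`, `ζ` a root of unity, and `P ∈ ℂ[X]`,
`(1 - ħ^β) ζ(β)^{-1} ∑_{n ≥ 1} P(ζ^n) n^{-β} → P(ζ)` as `β → ∞`. -/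
theorem gibbs_limit_evaluation (hbar : ℝ) (h0 : 0 < hbar) (h1 : hbar < 1)
    (ζ : ℂ) (d : ℕ) (hd : 1 ≤ d) (hζ : ζ ^ d = 1) (P : Polynomial ℂ) :
    Tendsto (fun β : ℝ =>
        (((1 - hbar ^ β : ℝ)) : ℂ) * (((∑' n : ℕ+, ((n : ℕ) : ℝ) ^ (-β)) : ℝ) : ℂ)⁻¹ *
          ∑' n : ℕ+, P.eval (ζ ^ (n : ℕ)) * ((((n : ℕ) : ℝ) ^ (-β) : ℝ) : ℂ))
      atTop (nhds (P.eval ζ)) := by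
  have hnorm : ‖ζ‖ = 1 := Complex.norm_eq_one_of_pow_eq_one hζ (by omega)
  obtain ⟨C, hC⟩ := (isCompact_closedBall (0 : ℂ) 1).exists_bound_of_continuousOn
    P.continuous.continuousOn
  have hP := tendsto_dirichlet_atTop (fun n : ℕ+ => P.eval (ζ ^ (n : ℕ))) C
    (fun n => hC _ (by simp [hnorm]))
  have hZ := tendsto_dirichlet_atTop (fun _ => 1) 1 (by simp)
  have hH : Tendsto (fun β : ℝ => ((1 - hbar ^ β : ℝ) : ℂ)) atTop (nhds 1) := by
    have h := (tendsto_rpow_atTop_of_base_lt_one hbar (by linarith) h1).const_sub 1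
    simpa [Function.comp_def] using (Complex.continuous_ofReal.tendsto _).comp h
  have hres := (hH.mul (hZ.inv₀ one_ne_zero)).mul hP
  simpa [Complex.ofReal_tsum] using hres
end

section
/- Let ħ be a real number with 0 < ħ < 1, let ζ ∈ ℂ satisfy ζ^d = 1 for some integer d ≥ 1, let P ∈ ℂ[X], and let ℓ be a natural number. Then, as the real parameter β tends to +∞, the quantity (1 − ħ^β)·(∑_{n ≥ 1} n^{−β})^{−1} · ∑_{n ≥ 1} (hasseDeriv_ℓ (P ∘ X^n))(ζ) · n^{−β} tends to (hasseDeriv_ℓ P)(ζ), the ℓ-th Taylor coefficient of P at ζ. -/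
/-!
The Taylor coefficients `c n` of `P(q ^ n)` at a point of modulus one are `O(n ^ ℓ)`
(`exists_norm_taylor_coeff_le`): for `P = q ^ k` the coefficient is `(n k choose ℓ) ζ ^ (n k - ℓ)`.
For any sequence of polynomial growth, dominated convergence shows that the Dirichlet series
`∑ c n * n ^ (-β)` tends to its leading coefficient `c 1` as `β → ∞`
(`tendsto_dirichlet_series`). Applying this to the Taylor coefficients and to the constant
sequence `1`, together with `ħ ^ β → 0`, gives the limit `(1 - 0) * 1⁻¹ * c 1`.
-/

open Polynomial Filter

/-- At a point of modulus one, the `ℓ`-th Taylor coefficient of `P(q ^ n)` grows at most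
like `n ^ ℓ`. -/
lemma exists_norm_taylor_coeff_le (ζ : ℂ) (hζ : ‖ζ‖ = 1) (P : Polynomial ℂ) (ℓ : ℕ) :
    ∃ C : ℝ, ∀ n : ℕ+,
      ‖(Polynomial.hasseDeriv ℓ (P.comp ((X : Polynomial ℂ) ^ (n : ℕ)))).eval ζ‖
        ≤ C * ((n : ℕ) : ℝ) ^ ℓ := by
  induction P using Polynomial.induction_on' with
  | add p q hp hq =>
    obtain ⟨A, hA⟩ := hp
    obtain ⟨B, hB⟩ := hq
    refine ⟨A + B, fun n => ?_⟩
    rw [add_comp, map_add, eval_add, add_mul]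
    exact (norm_add_le _ _).trans (add_le_add (hA n) (hB n))
  | monomial k a =>
    refine ⟨‖a‖ * (k : ℝ) ^ ℓ, fun n => ?_⟩
    have hcomp : (monomial k a).comp ((X : Polynomial ℂ) ^ (n : ℕ))
        = monomial ((n : ℕ) * k) a := by
      rw [monomial_comp, ← pow_mul, C_mul_X_pow_eq_monomial]
    rw [hcomp, hasseDeriv_monomial, eval_monomial, norm_mul, norm_mul, norm_pow, hζ, one_pow,
      mul_one, Complex.norm_natCast]
    have hchoose : ((((n : ℕ) * k).choose ℓ : ℕ) : ℝ) ≤ (((n : ℕ) * k : ℕ) : ℝ) ^ ℓ := by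
      exact_mod_cast Nat.choose_le_pow _ _
    calc _ ≤ (((n : ℕ) * k : ℕ) : ℝ) ^ ℓ * ‖a‖ := by gcongr
      _ = _ := by push_cast; ring

/-- A Dirichlet series whose coefficients have polynomial growth tends to its first coefficient
as the real exponent tends to infinity. -/
lemma tendsto_dirichlet_series (c : ℕ+ → ℂ) (C : ℝ) (k : ℕ)
    (hc : ∀ n : ℕ+, ‖c n‖ ≤ C * ((n : ℕ) : ℝ) ^ k) :
    Tendsto (fun β : ℝ => ∑' n : ℕ+, c n * ((((n : ℕ) : ℝ) ^ (-β) : ℝ) : ℂ))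
      atTop (nhds (c 1)) := by
  have hlim : ∑' n : ℕ+, (if n = 1 then c 1 else 0) = c 1 := tsum_ite_eq 1 _
  rw [← hlim]
  -- For `β ≥ k + 2` the terms are dominated by the summable sequence `C * n ^ (-2)`.
  refine tendsto_tsum_of_dominated_convergence
    (bound := fun n : ℕ+ => C * ((n : ℕ) : ℝ) ^ (-2 : ℝ)) ?_ ?_ ?_
  · have hs : Summable (fun n : ℕ => (n : ℝ) ^ (-2 : ℝ)) :=
      Real.summable_nat_rpow.2 (by norm_num)
    exact (hs.comp_injective PNat.coe_injective).mul_left C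
  · intro n
    by_cases hn : n = 1
    · subst hn
      simp
    · rw [if_neg hn]
      have hn1 : (1 : ℝ) < ((n : ℕ) : ℝ) := by
        have : 1 < n := lt_of_le_of_ne one_le (Ne.symm hn)
        exact_mod_cast this
      have h := (tendsto_rpow_atBot_of_base_gt_one _ hn1).comp tendsto_neg_atTop_atBot
      have h' := ((Complex.continuous_ofReal.tendsto 0).comp h).const_mul (c n)
      simpa using h'
  · filter_upwards [eventually_ge_atTop ((k : ℝ) + 2)] with β hβ n
    have hn1 : (1 : ℝ) ≤ ((n : ℕ) : ℝ) := by exact_mod_cast (one_le : 1 ≤ n)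
    have hn0 : (0 : ℝ) < ((n : ℕ) : ℝ) := by linarith
    have hC : 0 ≤ C := by
      have h := (norm_nonneg _).trans (hc 1)
      simpa using h
    rw [norm_mul, Complex.norm_real, Real.norm_of_nonneg (Real.rpow_nonneg hn0.le _)]
    calc ‖c n‖ * ((n : ℕ) : ℝ) ^ (-β)
        ≤ C * ((n : ℕ) : ℝ) ^ k * ((n : ℕ) : ℝ) ^ (-β) := by gcongr; exact hc n
      _ = C * ((n : ℕ) : ℝ) ^ ((k : ℝ) + -β) := by
        rw [Real.rpow_add hn0, Real.rpow_natCast, mul_assoc]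
      _ ≤ C * ((n : ℕ) : ℝ) ^ (-2 : ℝ) := by
        gcongr
        linarith

/-- Zero-temperature limits of Gibbs states recover all Taylor coefficients at roots of unity:
for `0 < ħ < 1`, `ζ` a root of unity, `P ∈ ℂ[X]` and `ℓ ∈ ℕ`,
`(1 - ħ^β) ζ(β)^{-1} ∑_{n ≥ 1} 𝔱_{ζ,ℓ}(P(q^n)) n^{-β} → 𝔱_{ζ,ℓ}(P)` as `β → ∞`,
where `𝔱_{ζ,ℓ}(Q) = (hasseDeriv ℓ Q)(ζ)` is the `ℓ`-th Taylor coefficient at `ζ`. -/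
theorem gibbs_limit_taylor_coefficient (hbar : ℝ) (h0 : 0 < hbar) (h1 : hbar < 1)
    (ζ : ℂ) (d : ℕ) (hd : 1 ≤ d) (hζ : ζ ^ d = 1) (P : Polynomial ℂ) (ℓ : ℕ) :
    Tendsto (fun β : ℝ =>
        (((1 - hbar ^ β : ℝ)) : ℂ) * (((∑' n : ℕ+, ((n : ℕ) : ℝ) ^ (-β)) : ℝ) : ℂ)⁻¹ *
          ∑' n : ℕ+, (Polynomial.hasseDeriv ℓ (P.comp ((X : Polynomial ℂ) ^ (n : ℕ)))).eval ζ *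
            ((((n : ℕ) : ℝ) ^ (-β) : ℝ) : ℂ))
      atTop (nhds ((Polynomial.hasseDeriv ℓ P).eval ζ)) := by
  have hnorm : ‖ζ‖ = 1 := Complex.norm_eq_one_of_pow_eq_one hζ (by omega)
  obtain ⟨C, hC⟩ := exists_norm_taylor_coeff_le ζ hnorm P ℓ
  have hnum := tendsto_dirichlet_series _ C ℓ hC
  have hzeta : Tendsto (fun β : ℝ => (((∑' n : ℕ+, ((n : ℕ) : ℝ) ^ (-β)) : ℝ) : ℂ))
      atTop (nhds 1) := by
    have h := tendsto_dirichlet_series (fun _ => 1) 1 0 (fun n => by simp)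
    simpa only [one_mul, ← Complex.ofReal_tsum] using h
  have hpow : Tendsto (fun β : ℝ => (((1 - hbar ^ β : ℝ)) : ℂ)) atTop (nhds 1) := by
    have h := (tendsto_rpow_atTop_of_base_lt_one hbar (by linarith) h1).const_sub 1
    have h' := (Complex.continuous_ofReal.tendsto _).comp h
    simpa [Function.comp_def] using h'
  have h := (hpow.mul (hzeta.inv₀ one_ne_zero)).mul hnum
  simpa using h
end

section
/- Let Q = ℚ/ℤ be the quotient of the additive group of rationals by the integers, let α be an n×n integer matrix with det α > 0, and let r : Fin n → Q. Then the set of solutions s : Fin n → Q of the system ∑_j α_{ij} • s_j = r_i (for all i) is finite of cardinality exactly det α. -/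
/-!
Lift `r` to `t ∈ ℚⁿ`. As `α` is invertible over `ℚ`, the solutions of `α(s) = r` are exactly the
classes of the vectors `α⁻¹ (t + v)` with `v ∈ ℤⁿ`, and `v`, `w` give the same class exactly when
`α⁻¹ (v - w) ∈ ℤⁿ`, that is when `v - w ∈ α ℤⁿ`. So the solution set is in bijection with the
cokernel `ℤⁿ ⧸ α ℤⁿ`, whose cardinality is `|det α|` (`Submodule.natAbs_det_equiv`). Existence of
a solution needs no separate argument.
-/

open Matrix

lemma mk_eq_mk_iff_exists_int (a b : ℚ) :
    (QuotientAddGroup.mk a : ℚ ⧸ AddSubgroup.zmultiples (1 : ℚ)) = QuotientAddGroup.mk b ↔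
      ∃ k : ℤ, a = b + k := by
  rw [eq_comm, QuotientAddGroup.eq, AddSubgroup.mem_zmultiples_iff]
  refine exists_congr fun k => ?_
  simp only [zsmul_eq_mul, mul_one]
  constructor <;> intro h <;> linarith

/-- The action of `α` on `(ℚ/ℤ)ⁿ` is induced by its action on `ℚⁿ`. -/
lemma sum_zsmul_mk {n : ℕ} (α : Matrix (Fin n) (Fin n) ℤ) (x : Fin n → ℚ) (i : Fin n) :
    ∑ j, α i j • (QuotientAddGroup.mk (x j) : ℚ ⧸ AddSubgroup.zmultiples (1 : ℚ)) =
      QuotientAddGroup.mk ((α.map (Int.cast : ℤ → ℚ) *ᵥ x) i) := by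
  change ∑ j, α i j • QuotientAddGroup.mk' (AddSubgroup.zmultiples (1 : ℚ)) (x j) =
    QuotientAddGroup.mk' (AddSubgroup.zmultiples (1 : ℚ)) _
  simp only [← map_zsmul, ← map_sum]
  simp [Matrix.mulVec, dotProduct]

lemma map_mulVec_intCast {n : ℕ} (α : Matrix (Fin n) (Fin n) ℤ) (v : Fin n → ℤ) :
    α.map (Int.cast : ℤ → ℚ) *ᵥ (fun j => (v j : ℚ)) = fun i => ((α *ᵥ v) i : ℚ) := by
  ext i
  simp [Matrix.mulVec, dotProduct]

lemma card_quotient_range_mulVecLin {n : ℕ} (α : Matrix (Fin n) (Fin n) ℤ) (hα : α.det ≠ 0) :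
    Nat.card ((Fin n → ℤ) ⧸ LinearMap.range α.mulVecLin) = α.det.natAbs := by
  have hinj : Function.Injective α.mulVecLin := by
    rw [← LinearMap.ker_eq_bot, LinearMap.ker_eq_bot']
    exact fun v hv => Matrix.eq_zero_of_mulVec_eq_zero hα hv
  rw [← Submodule.natAbs_det_equiv _ (LinearEquiv.ofInjective α.mulVecLin hinj),
    ← LinearMap.det_toLin']
  rfl

/-- For `α` an integer matrix with positive determinant and `r ∈ (ℚ/ℤ)^n`, the set of
solutions `s ∈ (ℚ/ℤ)^n` of `α(s) = r` is finite of cardinality exactly `det α`. -/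
theorem card_matrix_preimage_QmodZ (n : ℕ) (α : Matrix (Fin n) (Fin n) ℤ) (hα : 0 < α.det)
    (r : Fin n → ℚ ⧸ AddSubgroup.zmultiples (1 : ℚ)) :
    {s : Fin n → ℚ ⧸ AddSubgroup.zmultiples (1 : ℚ) | ∀ i, ∑ j, α i j • s j = r i}.Finite ∧
    ((Nat.card {s : Fin n → ℚ ⧸ AddSubgroup.zmultiples (1 : ℚ) //
        ∀ i, ∑ j, α i j • s j = r i} : ℤ) = α.det) := by
  have key : Nat.card {s : Fin n → ℚ ⧸ AddSubgroup.zmultiples (1 : ℚ) //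
      ∀ i, ∑ j, α i j • s j = r i} = α.det.natAbs := by
    rw [← card_quotient_range_mulVecLin α hα.ne']
    choose t ht using fun i => QuotientAddGroup.mk_surjective (r i)
    set A : Matrix (Fin n) (Fin n) ℚ := α.map (Int.cast : ℤ → ℚ) with hA
    have hdet : IsUnit A.det := by
      have h : A.det = (α.det : ℚ) := ((Int.castRingHom ℚ).map_det α).symm
      rw [h, isUnit_iff_ne_zero]
      exact_mod_cast hα.ne'
    have hAinv (x : Fin n → ℚ) : A *ᵥ (A⁻¹ *ᵥ x) = x := by
      rw [mulVec_mulVec, mul_nonsing_inv _ hdet, one_mulVec]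
    have hinvA (x : Fin n → ℚ) : A⁻¹ *ᵥ (A *ᵥ x) = x := by
      rw [mulVec_mulVec, nonsing_inv_mul _ hdet, one_mulVec]
    let F : (Fin n → ℤ) → {s : Fin n → ℚ ⧸ AddSubgroup.zmultiples (1 : ℚ) //
        ∀ i, ∑ j, α i j • s j = r i} := fun v =>
      ⟨fun j => QuotientAddGroup.mk ((A⁻¹ *ᵥ (fun i => t i + v i)) j), fun i => by
        rw [sum_zsmul_mk, ← hA, hAinv, ← ht i, mk_eq_mk_iff_exists_int]
        exact ⟨v i, rfl⟩⟩
    have hFsurj : Function.Surjective F := by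
      rintro ⟨s, hs⟩
      choose x hx using fun j => QuotientAddGroup.mk_surjective (s j)
      obtain rfl : (fun j => QuotientAddGroup.mk (x j)) = s := funext hx
      have h (i : Fin n) : ∃ k : ℤ, (A *ᵥ x) i = t i + k := by
        rw [← mk_eq_mk_iff_exists_int, ht i, ← hs i, sum_zsmul_mk]
      choose v hv using h
      refine ⟨v, Subtype.ext (funext fun j => ?_)⟩
      change QuotientAddGroup.mk ((A⁻¹ *ᵥ (fun i => t i + v i)) j) = QuotientAddGroup.mk (x j)
      rw [← funext hv, hinvA]
    have hF (v w : Fin n → ℤ) : F v = F w ↔ v - w ∈ LinearMap.range α.mulVecLin := by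
      have h1 : F v = F w ↔ ∀ j, ∃ k : ℤ, (A⁻¹ *ᵥ (fun i => t i + v i)) j =
          (A⁻¹ *ᵥ (fun i => t i + w i)) j + k := by
        simp only [← mk_eq_mk_iff_exists_int]
        rw [Subtype.ext_iff, funext_iff]
      have h2 : (fun i => t i + (v i : ℚ)) =
          (fun i => t i + (w i : ℚ)) + fun i => ((v - w) i : ℚ) := by
        ext i
        simp
      rw [h1, h2, mulVec_add]
      simp only [Pi.add_apply, add_right_inj]
      constructor
      · intro h
        choose u hu using h
        refine ⟨u, funext fun i => ?_⟩
        have h3 := congrFun (map_mulVec_intCast α u) i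
        rw [← hA, ← funext hu, hAinv] at h3
        exact_mod_cast h3.symm
      · rintro ⟨u, hu⟩ j
        refine ⟨u j, ?_⟩
        rw [← hu]
        simp only [mulVecLin_apply]
        rw [← map_mulVec_intCast, ← hA, hinvA]
    refine (Nat.card_congr (Equiv.ofBijective (Quotient.lift F fun v w hvw => ?_) ⟨?_, ?_⟩)).symm
    · exact (hF v w).2 ((Submodule.quotientRel_def _).1 hvw)
    · rintro ⟨v⟩ ⟨w⟩ h
      exact Quotient.sound ((Submodule.quotientRel_def _).2 ((hF v w).1 h))
    · intro s
      obtain ⟨v, rfl⟩ := hFsurj s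
      exact ⟨Quotient.mk _ v, rfl⟩
  refine ⟨?_, by rw [key]; exact Int.natAbs_of_nonneg hα.le⟩
  -- `Nat.card` is `0` on infinite types, so a positive cardinality forces finiteness.
  exact Set.finite_coe_iff.1 (Nat.finite_of_card_ne_zero
    (key.trans_ne (Int.natAbs_ne_zero.2 hα.ne')))
end

section
/- Let n ≥ 1 and let s be a complex number with Re(s) > n. Then the family H ↦ (index of H)^{−s}, indexed by the additive subgroups H of ℤ^n of finite index, is summable, and ∑_H (index H)^{−s} = ∏_{k=0}^{n−1} ζ(s − k), where ζ is the Riemann zeta function. -/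
/-!
The proof is by induction on `n`, splitting off one coordinate: `ℤ^(n+1) ≃ ℤ^n × ℤ`.

For any commutative group `A`, a finite-index subgroup `H ≤ A × ℤ` is determined by
* the finite-index subgroup `K = {a | (a, 0) ∈ H}` of `A`,
* the positive generator `m` of its projection to `ℤ`,
* the class `c ∈ A ⧸ K` of those `a` with `(a, m) ∈ H`,

and every triple `(m, K, c)` occurs, with `[A × ℤ : H] = m [A : K]`. Since `c` ranges over `[A : K]`
values, summing `(m [A : K])^(-s)` over all triples gives
`Z_{A × ℤ}(s) = ζ(s) * Z_A(s - 1)`, with absolute convergence for `Re s > 1` as soon as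
`Z_A` converges at `s - 1`. Iterating from `Z_{ℤ^0} = 1` yields the product of shifted zeta values.
-/

namespace SubgroupZeta

/-- The finite-index additive subgroups of `A`. -/
abbrev FinIdx (A : Type*) [AddCommGroup A] := {H : AddSubgroup A // H.index ≠ 0}

variable {A : Type*} [AddCommGroup A]

/-- The index of a subgroup of a product is the index of its projection times the index of its
intersection with the other factor. -/
lemma index_prod_eq {B : Type*} [AddCommGroup B] (H : AddSubgroup (A × B)) :
    H.index = (H.map (AddMonoidHom.snd A B)).index * (H.comap (AddMonoidHom.inl A B)).index := by
  have hker : (AddMonoidHom.snd A B).ker = (AddMonoidHom.inl A B).range := by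
    ext ⟨a, b⟩
    rw [AddMonoidHom.mem_ker, AddMonoidHom.mem_range]
    exact ⟨fun h => ⟨a, Prod.ext rfl h.symm⟩, fun ⟨_, h⟩ => (congrArg Prod.snd h).symm⟩
  have hr : (AddMonoidHom.snd A B).range = ⊤ :=
    AddMonoidHom.range_eq_top.2 Prod.snd_surjective
  rw [AddSubgroup.index_map, AddSubgroup.index_comap, hr, AddSubgroup.index_top, mul_one, ← hker,
    ← AddSubgroup.relIndex_sup_left, mul_comm, AddSubgroup.relIndex_mul_index le_sup_left]

/-- The subgroup of `A × ℤ` attached to a triple `(m, K, c)`: the preimage of the cyclic subgroup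
generated by `(c, m)` in `(A ⧸ K) × ℤ`. -/
def ofTriple (m : ℕ) (K : AddSubgroup A) (c : A ⧸ K) : AddSubgroup (A × ℤ) :=
  (AddSubgroup.zmultiples (c, (m : ℤ))).comap
    ((QuotientAddGroup.mk' K).prodMap (AddMonoidHom.id ℤ))

lemma mem_ofTriple {m : ℕ} {K : AddSubgroup A} {c : A ⧸ K} {a : A} {t : ℤ} :
    (a, t) ∈ ofTriple m K c ↔ ∃ j : ℤ, j • c = (a : A ⧸ K) ∧ j * m = t := by
  simp [ofTriple, AddSubgroup.mem_zmultiples_iff]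

lemma comap_ofTriple {m : ℕ} (hm : m ≠ 0) (K : AddSubgroup A) (c : A ⧸ K) :
    (ofTriple m K c).comap (AddMonoidHom.inl A ℤ) = K := by
  ext a
  simp only [AddSubgroup.mem_comap, AddMonoidHom.inl_apply, mem_ofTriple]
  constructor
  · rintro ⟨j, hj, hj0⟩
    have : j = 0 := by simpa [hm] using hj0
    subst this
    rw [zero_smul] at hj
    exact (QuotientAddGroup.eq_zero_iff a).1 hj.symm
  · intro ha
    exact ⟨0, by rw [zero_smul, (QuotientAddGroup.eq_zero_iff a).2 ha], by simp⟩

lemma map_ofTriple (m : ℕ) (K : AddSubgroup A) (c : A ⧸ K) :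
    (ofTriple m K c).map (AddMonoidHom.snd A ℤ) = AddSubgroup.zmultiples (m : ℤ) := by
  ext t
  simp only [AddSubgroup.mem_map, AddSubgroup.mem_zmultiples_iff, Prod.exists,
    AddMonoidHom.coe_snd, mem_ofTriple]
  constructor
  · rintro ⟨a, t', ⟨j, -, hj⟩, rfl⟩
    exact ⟨j, by simpa using hj⟩
  · rintro ⟨j, hj⟩
    obtain ⟨a, ha⟩ := QuotientAddGroup.mk_surjective (j • c)
    exact ⟨a, t, ⟨j, ha.symm, by simpa using hj⟩, rfl⟩

lemma index_ofTriple {m : ℕ} (hm : m ≠ 0) (K : AddSubgroup A) (c : A ⧸ K) :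
    (ofTriple m K c).index = m * K.index := by
  rw [index_prod_eq, comap_ofTriple hm, map_ofTriple, Int.index_zmultiples, Int.natAbs_natCast]

/-- The parametrization of the finite-index subgroups of `A × ℤ` by triples `(m, K, c)`. -/
def param (x : ℕ+ × (Σ K : FinIdx A, A ⧸ K.1)) : FinIdx (A × ℤ) :=
  ⟨ofTriple x.1 x.2.1.1 x.2.2, by
    rw [index_ofTriple x.1.ne_zero]
    exact mul_ne_zero x.1.ne_zero x.2.1.2⟩

lemma param_injective : Function.Injective (param (A := A)) := by
  rintro ⟨m, ⟨K, hK⟩, c⟩ ⟨m', ⟨K', hK'⟩, c'⟩ h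
  have h : ofTriple (m : ℕ) K c = ofTriple (m' : ℕ) K' c' := congrArg Subtype.val h
  have hKK : K = K' := by
    rw [← comap_ofTriple m.ne_zero K c, h, comap_ofTriple m'.ne_zero]
  subst hKK
  have hm : m = m' := by
    have := congrArg AddSubgroup.index (map_ofTriple (m : ℕ) K c)
    rw [h, map_ofTriple, Int.index_zmultiples, Int.index_zmultiples] at this
    exact PNat.eq (by simpa using this.symm)
  subst hm
  have hc : c = c' := by
    obtain ⟨a, rfl⟩ := QuotientAddGroup.mk_surjective c
    have ha : (a, ((m : ℕ) : ℤ)) ∈ ofTriple (m : ℕ) K (a : A ⧸ K) :=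
      mem_ofTriple.2 ⟨1, by simp, by simp⟩
    rw [h, mem_ofTriple] at ha
    obtain ⟨j, hj, hj1⟩ := ha
    have : j = 1 := by simpa using hj1
    subst this
    simpa using hj.symm
  subst hc
  rfl

lemma param_surjective : Function.Surjective (param (A := A)) := by
  rintro ⟨H, hH⟩
  have hidx := index_prod_eq H
  set K := H.comap (AddMonoidHom.inl A ℤ) with hKdef
  have hK : K.index ≠ 0 := fun h => hH (by rw [hidx, h, mul_zero])
  obtain ⟨g, hg⟩ := Int.subgroup_cyclic (H.map (AddMonoidHom.snd A ℤ))
  rw [← AddSubgroup.zmultiples_eq_closure, ← Int.zmultiples_natAbs] at hg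
  set m := g.natAbs
  have hm : m ≠ 0 := by
    intro h
    apply hH
    rw [hidx, hg, h, Int.index_zmultiples]
    simp
  have hmem : (m : ℤ) ∈ H.map (AddMonoidHom.snd A ℤ) := by
    rw [hg]; exact AddSubgroup.mem_zmultiples _
  obtain ⟨⟨a, m'⟩, haH, hm'⟩ := AddSubgroup.mem_map.1 hmem
  obtain rfl : m' = m := hm'
  refine ⟨⟨⟨m, Nat.pos_of_ne_zero hm⟩, ⟨K, hK⟩, (a : A ⧸ K)⟩, Subtype.ext ?_⟩
  change ofTriple m K (a : A ⧸ K) = H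
  have key : ∀ (b : A) (j : ℤ), j • (a : A ⧸ K) = (b : A ⧸ K) ↔ (b, j * (m : ℤ)) ∈ H := by
    intro b j
    rw [← QuotientAddGroup.mk_zsmul, QuotientAddGroup.eq, hKdef, AddSubgroup.mem_comap]
    have : (b, j * (m : ℤ)) = j • (a, (m : ℤ)) + AddMonoidHom.inl A ℤ (-(j • a) + b) := by
      simp
    rw [this, AddSubgroup.add_mem_cancel_left _ (H.zsmul_mem haH j)]
  ext ⟨b, t⟩
  rw [mem_ofTriple]
  constructor
  · rintro ⟨j, hj, rfl⟩
    exact (key b j).1 hj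
  · intro hb
    have : t ∈ H.map (AddMonoidHom.snd A ℤ) := AddSubgroup.mem_map.2 ⟨_, hb, rfl⟩
    rw [hg, AddSubgroup.mem_zmultiples_iff] at this
    obtain ⟨j, rfl⟩ := this
    exact ⟨j, (key b j).2 (by simpa using hb), by simp⟩

lemma hasSum_pnat_zeta {s : ℂ} (hs : 1 < s.re) :
    HasSum (fun m : ℕ+ => ((m : ℕ) : ℂ) ^ (-s)) (riemannZeta s) := by
  have h0 : ((0 : ℕ) : ℂ) ^ (-s) = 0 := by
    rw [Nat.cast_zero, Complex.zero_cpow]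
    rintro h
    have := congrArg Complex.re h
    simp at this
    linarith
  have hsum : Summable (fun m : ℕ => (m : ℂ) ^ (-s)) := by
    simpa [Complex.cpow_neg] using Complex.summable_one_div_nat_cpow.2 hs
  have hz : HasSum (fun m : ℕ => (m : ℂ) ^ (-s)) (riemannZeta s) := by
    rw [zeta_eq_tsum_one_div_nat_cpow hs]
    simpa [Complex.cpow_neg] using hsum.hasSum
  refine (Function.Injective.hasSum_iff PNat.coe_injective ?_).2 hz
  intro x hx
  rcases Nat.eq_zero_or_pos x with rfl | h
  · exact h0
  · exact absurd ⟨⟨x, h⟩, rfl⟩ hx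

/-- Each `K` is counted once for each of its `[A : K]` cosets, which shifts the exponent by `1`. -/
lemma hasSum_sigma {s z : ℂ}
    (h : HasSum (fun K : FinIdx A => (K.1.index : ℂ) ^ (-(s - 1))) z) :
    HasSum (fun x : (Σ K : FinIdx A, A ⧸ K.1) => (x.1.1.index : ℂ) ^ (-s)) z := by
  have hfin : ∀ K : FinIdx A, Finite (A ⧸ K.1) := fun K =>
    AddSubgroup.index_ne_zero_iff_finite.1 K.2
  have hpow : ∀ K : FinIdx A, (K.1.index : ℂ) * (K.1.index : ℂ) ^ (-s) =
      (K.1.index : ℂ) ^ (-(s - 1)) := by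
    intro K
    have : (K.1.index : ℂ) ≠ 0 := Nat.cast_ne_zero.2 K.2
    rw [show -(s - 1) = 1 + -s by ring, Complex.cpow_add _ _ this, Complex.cpow_one]
  have hfib : ∀ K : FinIdx A,
      HasSum (fun _ : A ⧸ K.1 => (K.1.index : ℂ) ^ (-s)) ((K.1.index : ℂ) ^ (-(s - 1))) := by
    intro K
    have := hfin K
    have := Fintype.ofFinite (A ⧸ K.1)
    convert hasSum_fintype (fun _ : A ⧸ K.1 => (K.1.index : ℂ) ^ (-s)) using 1
    rw [Finset.sum_const, Finset.card_univ, nsmul_eq_mul, ← Nat.card_eq_fintype_card, ← hpow]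
    rfl
  have hsum : Summable (fun x : (Σ K : FinIdx A, A ⧸ K.1) => (x.1.1.index : ℂ) ^ (-s)) := by
    refine Summable.of_norm ((summable_sigma_of_nonneg fun _ => norm_nonneg _).2 ⟨?_, ?_⟩)
    · intro K
      have := hfin K
      exact Summable.of_finite
    · refine h.summable.norm.congr fun K => ?_
      change _ = ∑' _ : A ⧸ K.1, ‖(K.1.index : ℂ) ^ (-s)‖
      rw [← hpow K, tsum_const, nsmul_eq_mul, norm_mul, Complex.norm_natCast]
      rfl
  have := hsum.hasSum
  rwa [(this.sigma hfib).unique h] at this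

lemma hasSum_mul_prod {ι κ : Type*} {f : ι → ℂ} {g : κ → ℂ} {a b : ℂ} (hf : HasSum f a)
    (hg : HasSum g b) : HasSum (fun x : ι × κ => f x.1 * g x.2) (a * b) :=
  hf.mul hg (summable_mul_of_summable_norm hf.summable.norm hg.summable.norm)

/-- The recursion `Z_{A × ℤ}(s) = ζ(s) * Z_A(s - 1)`. -/
lemma hasSum_prod {s z : ℂ} (hs : 1 < s.re)
    (h : HasSum (fun K : FinIdx A => (K.1.index : ℂ) ^ (-(s - 1))) z) :
    HasSum (fun H : FinIdx (A × ℤ) => (H.1.index : ℂ) ^ (-s)) (riemannZeta s * z) := by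
  have h3 := hasSum_mul_prod (hasSum_pnat_zeta hs) (hasSum_sigma h)
  have hval : ∀ x : ℕ+ × (Σ K : FinIdx A, A ⧸ K.1), ((param x).1.index : ℂ) ^ (-s) =
      ((x.1 : ℕ) : ℂ) ^ (-s) * (x.2.1.1.index : ℂ) ^ (-s) := by
    intro x
    have : (param x).1.index = x.1 * x.2.1.1.index := index_ofTriple x.1.ne_zero _ _
    rw [this, Nat.cast_mul, Complex.natCast_mul_natCast_cpow]
  have h4 : HasSum ((fun H : FinIdx (A × ℤ) => (H.1.index : ℂ) ^ (-s)) ∘ param)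
      (riemannZeta s * z) := h3.congr_fun hval
  exact (Equiv.ofBijective param ⟨param_injective, param_surjective⟩).hasSum_iff.1 h4

lemma hasSum_congr {B : Type*} [AddCommGroup B] (e : A ≃+ B) {s z : ℂ}
    (h : HasSum (fun K : FinIdx B => (K.1.index : ℂ) ^ (-s)) z) :
    HasSum (fun K : FinIdx A => (K.1.index : ℂ) ^ (-s)) z := by
  have hi : ∀ H : AddSubgroup A, (e.mapAddSubgroup H).index = H.index := fun H =>
    AddSubgroup.index_map_equiv H e
  let E : FinIdx A ≃ FinIdx B :=
    e.mapAddSubgroup.toEquiv.subtypeEquiv fun H => by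
      rw [← hi H]; rfl
  rw [← E.hasSum_iff] at h
  convert h using 1
  funext K
  exact congrArg (fun n : ℕ => (n : ℂ) ^ (-s)) (hi K.1).symm

/-- Splitting off the zeroth coordinate. -/
def splitEquiv (n : ℕ) : (Fin (n + 1) → ℤ) ≃+ (Fin n → ℤ) × ℤ where
  toFun f := (Fin.tail f, f 0)
  invFun p := Fin.cons p.2 p.1
  left_inv f := Fin.cons_self_tail f
  right_inv p := by simp
  map_add' _ _ := rfl

lemma hasSum_Zn (n : ℕ) : ∀ s : ℂ, (n : ℝ) < s.re →
    HasSum (fun H : FinIdx (Fin n → ℤ) => (H.1.index : ℂ) ^ (-s))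
      (∏ k ∈ Finset.range n, riemannZeta (s - k)) := by
  induction n with
  | zero =>
    intro s _
    have hidx : ∀ H : AddSubgroup (Fin 0 → ℤ), H.index = 1 := fun H =>
      AddSubgroup.index_eq_one.2 (Subsingleton.elim _ _)
    have : Unique (FinIdx (Fin 0 → ℤ)) :=
      { default := ⟨⊤, by simp⟩
        uniq := fun H => Subtype.ext (Subsingleton.elim _ _) }
    convert hasSum_unique (fun H : FinIdx (Fin 0 → ℤ) => (H.1.index : ℂ) ^ (-s)) using 1
    simp [hidx]
  | succ n ih =>
    intro s hs
    push_cast at hs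
    have hn : (0 : ℝ) ≤ n := n.cast_nonneg
    have h := hasSum_prod (s := s) (by linarith)
      (ih (s - 1) (by rw [Complex.sub_re, Complex.one_re]; linarith))
    convert hasSum_congr (splitEquiv n) h using 1
    rw [Finset.prod_range_succ', mul_comm]
    congr 1
    · simp
    · refine Finset.prod_congr rfl fun k _ => ?_
      congr 1
      push_cast
      ring

end SubgroupZeta

/-- The zeta function of `ℤ^n`: for `Re(s) > n`, the sum of `(index H)^{-s}` over the
finite-index additive subgroups `H` of `ℤ^n` converges and equals
`∏_{k=0}^{n-1} ζ(s - k)`. -/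
theorem subgroup_zeta_function_of_Zn (n : ℕ) (hn : 1 ≤ n) (s : ℂ)
    (hs : (n : ℝ) < s.re) :
    Summable (fun H : {H : AddSubgroup (Fin n → ℤ) // H.index ≠ 0} =>
      ((H.1.index : ℂ)) ^ (-s)) ∧
    (∑' H : {H : AddSubgroup (Fin n → ℤ) // H.index ≠ 0}, ((H.1.index : ℂ)) ^ (-s)) =
      ∏ k ∈ Finset.range n, riemannZeta (s - k) :=
  have h := SubgroupZeta.hasSum_Zn n s hs
  ⟨h.summable, h.tsum_eq⟩
end
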